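/- Let T be a tree on n vertices with diameter k − 1, where 3 ≤ k ≤ n. Then T ⪰ CP_{n,k}^{⌈k/2⌉}, and r(T) = r(CP_{n,k}^{⌈k/2⌉}) if and only if T is isomorphic to CP_{n,k}^{⌈k/2⌉}. -/

import Mathlib

namespace TreeOrder

attribute [local instance] Classical.propDecidable

variable {V : Type*} {W : Type*}

/-- `side G u v` = number of vertices strictly closer to `u` than to `v`;
for an edge `uv` of a tree this is the order of the component of `T - uv` containing `u`. -/
noncomputable def side [Fintype V] (G : SimpleGraph V) (u v : V) : ℕ :=
  (Finset.univ.filter fun w => G.dist w u < G.dist w v).card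

/-- `mu G u v = min (n_u(e), n_v(e))` for the edge `e = uv`. -/
noncomputable def mu [Fintype V] (G : SimpleGraph V) (u v : V) : ℕ :=
  min (side G u v) (side G v u)

/-- `mu` as a function on unordered pairs. -/
noncomputable def muE [Fintype V] (G : SimpleGraph V) : Sym2 V → ℕ :=
  Sym2.lift ⟨fun u v => mu G u v, fun _ _ => min_comm _ _⟩

/-- `r G i` = number of edges `e` of `G` with `μ(e) = i`. -/
noncomputable def r [Fintype V] (G : SimpleGraph V) (i : ℕ) : ℕ :=
  (Finset.univ.filter fun e : Sym2 V => e ∈ G.edgeSet ∧ muE G e = i).card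

/-- `tailSum G n k = Σ_{i=k}^{⌊n/2⌋} r_i(G)`. -/
noncomputable def tailSum [Fintype V] (G : SimpleGraph V) (n k : ℕ) : ℕ :=
  ∑ i ∈ Finset.Icc k (n / 2), r G i

/-- The order `⪯` on trees with `n` vertices, via edge division vectors. -/
def Preceq [Fintype V] [Fintype W] (n : ℕ) (G : SimpleGraph V) (H : SimpleGraph W) : Prop :=
  ∀ k, 1 ≤ k → k ≤ n / 2 → tailSum G n k ≤ tailSum H n k

/-- The strict order `≺`. -/
def Prec [Fintype V] [Fintype W] (n : ℕ) (G : SimpleGraph V) (H : SimpleGraph W) : Prop :=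
  Preceq n G H ∧ ∃ k, 1 ≤ k ∧ k ≤ n / 2 ∧ tailSum G n k < tailSum H n k

/-- Equality of edge division vectors `r(G) = r(H)`. -/
def SameEdgeDivision [Fintype V] [Fintype W] (n : ℕ) (G : SimpleGraph V)
    (H : SimpleGraph W) : Prop :=
  ∀ i, 1 ≤ i → i ≤ n / 2 → r G i = r H i

/-- `u` is a centroidal vertex: `n_u(e) ≥ n/2` for every edge `e` incident to `u`. -/
def IsCentroidal [Fintype V] (G : SimpleGraph V) (u : V) : Prop :=
  ∀ v, G.Adj u v → Fintype.card V ≤ 2 * side G u v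

/-- `u` is a proper centroidal vertex: `n_u(e) > ⌈n/2⌉` for every edge `e` incident to `u`. -/
def IsProperCentroidal [Fintype V] (G : SimpleGraph V) (u : V) : Prop :=
  ∀ v, G.Adj u v → (Fintype.card V + 1) / 2 < side G u v

/-- The edge `uv` is a center edge: `μ(uv) = ⌊n/2⌋`. -/
def IsCenterEdge [Fintype V] (G : SimpleGraph V) (u v : V) : Prop :=
  G.Adj u v ∧ mu G u v = Fintype.card V / 2

/-- degree of a vertex -/
noncomputable def deg [Fintype V] (G : SimpleGraph V) (v : V) : ℕ :=
  (Finset.univ.filter fun w => G.Adj v w).card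

/-- The path `P_n` on `n` vertices. -/
def pathG (n : ℕ) : SimpleGraph (Fin n) :=
  SimpleGraph.fromRel fun x y => (x : ℕ) + 1 = y

/-- The star `S_n` on `n` vertices. -/
def starG (n : ℕ) : SimpleGraph (Fin n) :=
  SimpleGraph.fromRel fun x _ => (x : ℕ) = 0

/-- The double star path `CP_{n;a,b}` : a path on `n - a - b` vertices (at positions
`a, …, n - b - 1`) with `a` pendent vertices attached to its first vertex and `b`
pendent vertices attached to its last vertex. -/
def doubleStar (n a b : ℕ) : SimpleGraph (Fin n) :=
  SimpleGraph.fromRel fun x y =>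
    ((x : ℕ) < a ∧ (y : ℕ) = a) ∨
    (a ≤ (x : ℕ) ∧ (x : ℕ) + 1 = y ∧ (y : ℕ) < n - b) ∨
    ((x : ℕ) = n - b - 1 ∧ n - b ≤ (y : ℕ))

/-- `CP_{n,k}^s` : a path `v_1 ⋯ v_k` (at positions `0, …, k-1`) with all
`n - k` pendent vertices attached to `v_s` (position `s - 1`). -/
def cpOne (n k s : ℕ) : SimpleGraph (Fin n) :=
  SimpleGraph.fromRel fun x y =>
    ((x : ℕ) + 1 = y ∧ (y : ℕ) < k) ∨ ((x : ℕ) = s - 1 ∧ k ≤ (y : ℕ))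

/-- The caterpillar `CP(n; n_1, …, n_k)` : a path `v_1 ⋯ v_k` (at positions `0, …, k-1`),
where pendent vertex `j` (for `k ≤ j < n`) is attached to the path vertex at
position `f j` (so `n_i = |{j : f j = i - 1}|`). -/
def caterpillar (n k : ℕ) (f : ℕ → ℕ) : SimpleGraph (Fin n) :=
  SimpleGraph.fromRel fun x y =>
    ((x : ℕ) + 1 = y ∧ (y : ℕ) < k) ∨ (k ≤ (y : ℕ) ∧ (x : ℕ) = f y)

/-- The balanced starlike tree `SP_{n,q}` : the center is vertex `0`, and vertex
`j ≥ 1` lies on branch `(j - 1) % q` at depth `(j - 1)/q + 1`; so the `q` branches are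
paths whose orders pairwise differ by at most `1`. -/
def balancedStar (n q : ℕ) : SimpleGraph (Fin n) :=
  SimpleGraph.fromRel fun x y =>
    ((x : ℕ) = 0 ∧ 1 ≤ (y : ℕ) ∧ (y : ℕ) ≤ q) ∨ (1 ≤ (x : ℕ) ∧ (x : ℕ) + q = y)

/-- The edge-moving transformation of `G` w.r.t. the edge `uv`: contract `uv` to `u`
(moving all edges at `v` to `u`) and attach `v` to `u` as a pendent vertex. -/
def edgeMove (G : SimpleGraph V) (u v : V) : SimpleGraph V :=
  SimpleGraph.fromRel fun x y =>
    (G.Adj x y ∧ x ≠ v ∧ y ≠ v) ∨ (x = u ∧ y = v) ∨ (x = u ∧ G.Adj v y ∧ y ≠ u)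

section EdgeCounts

variable [Fintype V]

/-- The edges of `G`, as a finset. -/
noncomputable def edges (G : SimpleGraph V) : Finset (Sym2 V) :=
  Finset.univ.filter fun e => e ∈ G.edgeSet

theorem mem_edges {G : SimpleGraph V} {e : Sym2 V} : e ∈ edges G ↔ e ∈ G.edgeSet := by
  simp [edges]

theorem card_edges {G : SimpleGraph V} (hT : G.IsTree) :
    (edges G).card = Fintype.card V - 1 := by
  rw [← hT.card_edgeFinset, Nat.add_sub_cancel]
  congr 1
  ext
  simp [edges]

theorem muE_mk (G : SimpleGraph V) (u v : V) : muE G s(u, v) = mu G u v := rfl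

theorem side_add_side_le (G : SimpleGraph V) (u v : V) :
    side G u v + side G v u ≤ Fintype.card V := by
  unfold side
  rw [← Finset.card_union_of_disjoint]
  · exact Finset.card_le_univ _
  · rw [Finset.disjoint_filter]
    intro w _ h
    omega

theorem side_pos {G : SimpleGraph V} {u v : V} (h : G.Adj u v) : 0 < side G u v := by
  unfold side
  rw [Finset.card_pos]
  exact ⟨u, by simp [SimpleGraph.dist_eq_one_iff_adj.2 h]⟩

theorem muE_mem_Icc {G : SimpleGraph V} {e : Sym2 V} (he : e ∈ edges G) :
    1 ≤ muE G e ∧ muE G e ≤ Fintype.card V / 2 := by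
  rw [mem_edges] at he
  induction e with
  | h u v =>
    rw [SimpleGraph.mem_edgeSet] at he
    have h1 := side_add_side_le G u v
    have h2 := side_pos he
    have h3 := side_pos he.symm
    rw [muE_mk, mu]
    omega

theorem tailSum_eq_card (G : SimpleGraph V) (j : ℕ) :
    tailSum G (Fintype.card V) j = ((edges G).filter fun e => j ≤ muE G e).card := by
  unfold tailSum
  rw [Finset.card_eq_sum_card_fiberwise (f := muE G)
    (t := Finset.Icc j (Fintype.card V / 2))]
  · refine Finset.sum_congr rfl fun i hi => ?_
    unfold r
    congr 1
    ext e
    have := Finset.mem_Icc.1 hi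
    simp only [Finset.mem_filter, Finset.mem_univ, true_and, mem_edges]
    constructor
    · rintro ⟨h, rfl⟩; exact ⟨⟨h, this.1⟩, rfl⟩
    · rintro ⟨⟨h, _⟩, h'⟩; exact ⟨h, h'⟩
  · intro e he
    simp only [Finset.coe_filter, Set.mem_ofPred_eq] at he
    simp only [Finset.coe_Icc, Set.mem_Icc]
    exact ⟨he.2, (muE_mem_Icc he.1).2⟩

/-- If every edge of `G` leaving `S` goes from `u` to `v`, then at most `|S|` vertices are
closer to `u` than to `v`. -/
theorem side_le_card_of_cut {G : SimpleGraph V} {u v : V} (S : Finset V) (huv : G.Adj u v)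
    (hu : u ∈ S) (hS : ∀ a b, G.Adj a b → a ∈ S → b ∉ S → a = u ∧ b = v) :
    side G u v ≤ S.card := by
  refine Finset.card_le_card fun w hw => ?_
  simp only [Finset.mem_filter, Finset.mem_univ, true_and] at hw
  by_contra hwS
  have hv : G.Reachable w v := SimpleGraph.Reachable.of_dist_ne_zero (by omega)
  obtain ⟨p, hp⟩ := (hv.trans huv.symm.reachable).exists_walk_length_eq_dist
  obtain ⟨d, hd, hd1, hd2⟩ :=
    p.exists_boundary_dart {x | x ∉ S} hwS (by simpa using hu)
  have hd2' : d.snd ∈ S := by simpa using hd2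
  have hdv := (hS _ _ d.adj.symm hd2' hd1).2
  have hvp : v ∈ p.support := hdv ▸ p.dart_fst_mem_support_of_mem_darts hd
  have := SimpleGraph.dist_le (p.takeUntil v hvp)
  have := p.length_takeUntil_le_length hvp
  omega

theorem side_comp_iso [Fintype W] {G : SimpleGraph V} {H : SimpleGraph W} (f : G ≃g H)
    (u v : V) : side H (f u) (f v) = side G u v := by
  unfold side
  symm
  refine Finset.card_equiv f.toEquiv fun w => ?_
  have h (x y : V) : H.dist (f x) (f y) = G.dist x y := by
    apply le_antisymm
    · by_cases hr : G.Reachable x y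
      · obtain ⟨p, hp⟩ := hr.exists_walk_length_eq_dist
        rw [← hp, ← SimpleGraph.Walk.length_map f.toHom p]
        exact SimpleGraph.dist_le _
      · rw [SimpleGraph.dist_eq_zero_of_not_reachable (by rwa [SimpleGraph.Iso.reachable_iff])]
        exact Nat.zero_le _
    · by_cases hr : G.Reachable x y
      · obtain ⟨p, hp⟩ := ((SimpleGraph.Iso.reachable_iff (φ := f)).2 hr).exists_walk_length_eq_dist
        rw [← hp]
        have := SimpleGraph.dist_le (p.map f.symm.toHom)
        simpa using this
      · rw [SimpleGraph.dist_eq_zero_of_not_reachable hr]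
        exact Nat.zero_le _
  simp [h]

theorem r_eq_of_iso [Fintype W] {G : SimpleGraph V} {H : SimpleGraph W} (f : G ≃g H)
    (i : ℕ) : r G i = r H i := by
  unfold r
  refine Finset.card_bijective (Sym2.map f) ⟨Sym2.map.injective f.injective, fun e => ?_⟩
    fun e => ?_
  · exact ⟨Sym2.map f.symm e, by simp [Sym2.map_map]⟩
  induction e with
  | h u v =>
    simp only [Finset.mem_filter, Finset.mem_univ, true_and]
    rw [Sym2.map_mk, SimpleGraph.mem_edgeSet, SimpleGraph.mem_edgeSet, f.map_adj_iff, muE_mk,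
      muE_mk, mu, mu, side_comp_iso, side_comp_iso]

end EdgeCounts

section Spine

/-- The value of `μ` on the `i`-th edge of `CP_{n,k}^{⌈k/2⌉}`: the edges with `i + 1 < k` form
the path `v_1 ⋯ v_k`, the others are pendent. -/
def spineMu (k i : ℕ) : ℕ := if i + 1 < k then min (i + 1) (k - 1 - i) else 1

theorem cpOne_adj {n k s : ℕ} {x y : Fin n} :
    (cpOne n k s).Adj x y ↔ x ≠ y ∧
      ((((x : ℕ) + 1 = y ∧ (y : ℕ) < k) ∨ ((x : ℕ) = s - 1 ∧ k ≤ (y : ℕ))) ∨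
      (((y : ℕ) + 1 = x ∧ (x : ℕ) < k) ∨ ((y : ℕ) = s - 1 ∧ k ≤ (x : ℕ)))) := by
  simp [cpOne, SimpleGraph.fromRel_adj]

theorem cpOne_mu_path_le {n k : ℕ} {x y : Fin n}
    (hxy : (x : ℕ) + 1 = y) (hy : (y : ℕ) < k) :
    mu (cpOne n k ((k + 1) / 2)) x y ≤ spineMu k x := by
  have hadj : (cpOne n k ((k + 1) / 2)).Adj x y := by
    rw [cpOne_adj, Ne, Fin.ext_iff]; omega
  have hb : spineMu k x = min (y : ℕ) (k - y) := by
    unfold spineMu; rw [if_pos (by omega)]; omega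
  rw [hb, mu]
  by_cases hc : (y : ℕ) < (k + 1) / 2
  · have := side_le_card_of_cut (Finset.univ.filter fun a : Fin n => (a : ℕ) < y) hadj
      (by simp; omega) (by
        intro a b hab ha hb
        simp only [Finset.mem_filter, Finset.mem_univ, true_and] at ha hb
        rw [cpOne_adj] at hab
        rw [Fin.ext_iff, Fin.ext_iff]; omega)
    rw [Fin.card_filter_val_lt] at this
    omega
  · have hcard : (Finset.univ.filter fun a : Fin n => (y : ℕ) ≤ a ∧ (a : ℕ) < k).card ≤
        k - y := by
      rw [← Nat.card_Ico, ← Finset.card_map Fin.valEmbedding]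
      refine Finset.card_le_card fun a ha => ?_
      simp only [Finset.mem_map, Finset.mem_filter, Finset.mem_univ, true_and] at ha
      obtain ⟨a, ha, rfl⟩ := ha
      simpa using ha
    have := side_le_card_of_cut
      (Finset.univ.filter fun a : Fin n => (y : ℕ) ≤ a ∧ (a : ℕ) < k) hadj.symm
      (by simp; omega) (by
        intro a b hab ha hb
        simp only [Finset.mem_filter, Finset.mem_univ, true_and] at ha hb
        rw [cpOne_adj] at hab
        rw [Fin.ext_iff, Fin.ext_iff]; omega)
    omega

theorem cpOne_mu_pendent_le {n k : ℕ} (hk : 3 ≤ k) {x y : Fin n}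
    (hx : (x : ℕ) = (k + 1) / 2 - 1) (hy : k ≤ (y : ℕ)) :
    mu (cpOne n k ((k + 1) / 2)) x y ≤ 1 := by
  have hadj : (cpOne n k ((k + 1) / 2)).Adj x y := by
    rw [cpOne_adj, Ne, Fin.ext_iff]; omega
  have := side_le_card_of_cut {y} hadj.symm (by simp) (by
    intro a b hab ha hb
    simp only [Finset.mem_singleton] at ha hb
    subst ha
    rw [cpOne_adj] at hab
    rw [Fin.ext_iff, Fin.ext_iff]; omega)
  rw [Finset.card_singleton] at this
  rw [mu]
  omega

theorem tailSum_cpOne_le {n k : ℕ} (hk : 3 ≤ k) (hkn : k ≤ n) (j : ℕ) :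
    tailSum (cpOne n k ((k + 1) / 2)) n j ≤
      (Finset.univ.filter fun i : Fin (n - 1) => j ≤ spineMu k i).card := by
  have h := tailSum_eq_card (cpOne n k ((k + 1) / 2)) j
  rw [Fintype.card_fin] at h
  rw [h]
  let φ : Fin (n - 1) → Sym2 (Fin n) := fun i =>
    s(if (i : ℕ) + 1 < k then ⟨i, by omega⟩ else ⟨(k + 1) / 2 - 1, by omega⟩,
      ⟨i + 1, by omega⟩)
  have key (x y : Fin n) (hxy : ((x : ℕ) + 1 = y ∧ (y : ℕ) < k) ∨
      ((x : ℕ) = (k + 1) / 2 - 1 ∧ k ≤ (y : ℕ)))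
      (hj : j ≤ mu (cpOne n k ((k + 1) / 2)) x y) :
      ∃ i : Fin (n - 1), j ≤ spineMu k i ∧ φ i = s(x, y) := by
    rcases hxy with ⟨h1, h2⟩ | ⟨h1, h2⟩
    · refine ⟨⟨x, by omega⟩, hj.trans (cpOne_mu_path_le h1 h2), ?_⟩
      simp only [φ]
      rw [if_pos (by omega)]
      congr
    · refine ⟨⟨y - 1, by omega⟩, hj.trans ((cpOne_mu_pendent_le hk h1 h2).trans ?_), ?_⟩
      · simp only [spineMu]; rw [if_neg (by omega)]
      · simp only [φ]
        rw [if_neg (by omega)]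
        congr
        · exact h1.symm
        · omega
  refine (Finset.card_le_card (t := (Finset.univ.filter fun i : Fin (n - 1) =>
    j ≤ spineMu k i).image φ) fun e he => ?_).trans Finset.card_image_le
  simp only [Finset.mem_filter, mem_edges, Finset.mem_image, Finset.mem_univ, true_and] at he ⊢
  induction e with
  | h x y =>
    rw [SimpleGraph.mem_edgeSet, cpOne_adj] at he
    obtain ⟨⟨_, h | h⟩, hj⟩ := he
    · exact key x y h hj
    · rw [Sym2.eq_swap] at hj ⊢
      exact key y x h hj

end Spine

section Geodesic

variable {G : SimpleGraph V} {k : ℕ} {P : ℕ → V}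

/-- `P 0, …, P (k - 1)` are the vertices of a geodesic of `G`. -/
def IsGeodesic (G : SimpleGraph V) (k : ℕ) (P : ℕ → V) : Prop :=
  ∀ i j, i ≤ j → j < k → G.dist (P i) (P j) = j - i

theorem exists_isGeodesic [Finite V] (hG : G.Connected) (hd : G.diam = k - 1) :
    ∃ P, IsGeodesic G k P := by
  have := hG.nonempty
  obtain ⟨u, v, huv⟩ := G.exists_dist_eq_diam
  obtain ⟨p, hp⟩ := hG.exists_walk_length_eq_dist u v
  have hstep (i d : ℕ) : G.dist (p.getVert i) (p.getVert (i + d)) ≤ d := by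
    have h := SimpleGraph.dist_le ((p.drop i).take d)
    rw [SimpleGraph.Walk.take_length] at h
    simp only [SimpleGraph.Walk.drop_getVert] at h
    exact h.trans (min_le_left _ _)
  refine ⟨p.getVert, fun i j hij hj => ?_⟩
  have h1 := hstep 0 i
  have h2 := hstep i (j - i)
  have h3 := hstep j (p.length - j)
  rw [Nat.add_sub_cancel' (by omega)] at h2 h3
  rw [Nat.zero_add, SimpleGraph.Walk.getVert_zero] at h1
  rw [SimpleGraph.Walk.getVert_length] at h3
  have h4 := hG.dist_triangle (u := u) (v := p.getVert i) (w := v)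
  have h5 := hG.dist_triangle (u := p.getVert i) (v := p.getVert j) (w := v)
  omega

theorem IsGeodesic.reverse (hP : IsGeodesic G k P) :
    IsGeodesic G k fun i => P (k - 1 - i) := by
  intro i j hij hj
  rw [SimpleGraph.dist_comm, hP _ _ (by omega) (by omega)]
  omega

theorem IsGeodesic.injOn (hP : IsGeodesic G k P) {i j : ℕ} (hi : i < k) (hj : j < k)
    (h : P i = P j) : i = j := by
  rcases le_total i j with hij | hij
  · have := hP i j hij hj
    rw [h, SimpleGraph.dist_self] at this; omega
  · have := hP j i hij hi
    rw [h, SimpleGraph.dist_self] at this; omega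

theorem IsGeodesic.adj_iff (hP : IsGeodesic G k P) {i j : ℕ} (hi : i < k) (hj : j < k) :
    G.Adj (P i) (P j) ↔ i + 1 = j ∨ j + 1 = i := by
  rw [← SimpleGraph.dist_eq_one_iff_adj]
  rcases le_total i j with hij | hij
  · rw [hP i j hij hj]; omega
  · rw [SimpleGraph.dist_comm, hP j i hij hi]; omega

theorem IsGeodesic.card_le_side [Fintype V] (hP : IsGeodesic G k P) {i : ℕ} (hi : i + 1 < k) :
    i + 1 ≤ side G (P i) (P (i + 1)) := by
  have h : ((Finset.range (i + 1)).image P).card = i + 1 := by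
    rw [Finset.card_image_of_injOn, Finset.card_range]
    intro a ha b hb hab
    simp only [Finset.coe_range, Set.mem_Iio] at ha hb
    exact hP.injOn (by omega) (by omega) hab
  refine h.ge.trans (Finset.card_le_card fun w hw => ?_)
  simp only [Finset.mem_image, Finset.mem_range] at hw
  obtain ⟨a, ha, rfl⟩ := hw
  simp only [Finset.mem_filter, Finset.mem_univ, true_and]
  rw [hP a i (by omega) (by omega), hP a (i + 1) (by omega) hi]
  omega

theorem IsGeodesic.card_lt_side [Fintype V] (hP : IsGeodesic G k P) {i : ℕ} (hi : i + 1 < k)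
    {z : V} (hz : ∀ a < k, z ≠ P a) (hzi : G.dist z (P i) < G.dist z (P (i + 1))) :
    i + 1 < side G (P i) (P (i + 1)) := by
  have h : (insert z ((Finset.range (i + 1)).image P)).card = i + 2 := by
    rw [Finset.card_insert_of_notMem, Finset.card_image_of_injOn, Finset.card_range]
    · intro a ha b hb hab
      simp only [Finset.coe_range, Set.mem_Iio] at ha hb
      exact hP.injOn (by omega) (by omega) hab
    · simp only [Finset.mem_image, Finset.mem_range, not_exists, not_and]
      exact fun a ha h => hz a (by omega) h.symm
  refine Nat.lt_of_succ_le (h.ge.trans (Finset.card_le_card fun w hw => ?_))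
  simp only [Finset.mem_insert, Finset.mem_image, Finset.mem_range] at hw
  simp only [Finset.mem_filter, Finset.mem_univ, true_and]
  obtain rfl | ⟨a, ha, rfl⟩ := hw
  · exact hzi
  rw [hP a i (by omega) (by omega), hP a (i + 1) (by omega) hi]
  omega

theorem IsGeodesic.card_le_side' [Fintype V] (hP : IsGeodesic G k P) {i : ℕ} (hi : i + 1 < k) :
    k - 1 - i ≤ side G (P (i + 1)) (P i) := by
  have := hP.reverse.card_le_side (i := k - 2 - i) (by omega)
  simp only [show k - 1 - (k - 2 - i) = i + 1 by omega,
    show k - 1 - (k - 2 - i + 1) = i by omega] at this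
  omega

theorem IsGeodesic.card_lt_side' [Fintype V] (hP : IsGeodesic G k P) {i : ℕ} (hi : i + 1 < k)
    {z : V} (hz : ∀ a < k, z ≠ P a) (hzi : G.dist z (P (i + 1)) < G.dist z (P i)) :
    k - 1 - i < side G (P (i + 1)) (P i) := by
  have := hP.reverse.card_lt_side (i := k - 2 - i) (z := z) (by omega)
    (fun a ha => hz _ (by omega)) (by
      simpa only [show k - 1 - (k - 2 - i) = i + 1 by omega,
        show k - 1 - (k - 2 - i + 1) = i by omega] using hzi)
  simp only [show k - 1 - (k - 2 - i) = i + 1 by omega,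
    show k - 1 - (k - 2 - i + 1) = i by omega] at this
  omega

/-- The edges of a tree can be enumerated so that those of a given geodesic come first. -/
theorem IsGeodesic.exists_edge_equiv [Fintype V] (hP : IsGeodesic G k P) (hT : G.IsTree) :
    ∃ g : Fin (Fintype.card V - 1) ≃ edges G,
      ∀ i : Fin (Fintype.card V - 1), (i : ℕ) + 1 < k → (g i : Sym2 V) = s(P i, P (i + 1)) := by
  obtain ⟨g, hg⟩ := Finset.exists_equiv_extend_of_card_eq (t := edges G)
    (by rw [Fintype.card_fin, card_edges hT])
    (s := Finset.univ.filter fun i : Fin (Fintype.card V - 1) => (i : ℕ) + 1 < k)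
    (f := fun i => s(P i, P (i + 1))) (by
      intro e he
      simp only [Finset.mem_image, Finset.mem_filter, Finset.mem_univ, true_and] at he
      obtain ⟨i, hi, rfl⟩ := he
      rw [mem_edges, SimpleGraph.mem_edgeSet, hP.adj_iff (by omega) hi]
      omega) (by
      intro a ha b hb hab
      simp only [Finset.coe_filter, Finset.mem_univ, true_and, Set.mem_ofPred_eq] at ha hb
      simp only [Sym2.eq_iff] at hab
      rcases hab with ⟨h, -⟩ | ⟨h1, h2⟩
      · exact Fin.ext (hP.injOn (by omega) (by omega) h)
      · have := hP.injOn (by omega) (by omega) h1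
        have := hP.injOn (by omega) (by omega) h2
        omega)
  exact ⟨g, fun i hi => hg i (by simpa using hi)⟩

theorem IsGeodesic.spineMu_le [Fintype V] (hP : IsGeodesic G k P)
    {g : Fin (Fintype.card V - 1) ≃ edges G}
    (hg : ∀ i : Fin (Fintype.card V - 1), (i : ℕ) + 1 < k →
      (g i : Sym2 V) = s(P i, P (i + 1)))
    (i : Fin (Fintype.card V - 1)) : spineMu k i ≤ muE G (g i) := by
  unfold spineMu
  split_ifs with h
  · rw [hg i h, muE_mk, mu]
    have := hP.card_le_side h
    have := hP.card_le_side' h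
    omega
  · exact (muE_mem_Icc (g i).2).1

theorem tailSum_eq_card_of_equiv [Fintype V] {m : ℕ} (g : Fin m ≃ edges G) (j : ℕ) :
    tailSum G (Fintype.card V) j =
      (Finset.univ.filter fun i : Fin m => j ≤ muE G (g i)).card := by
  rw [tailSum_eq_card]
  symm
  refine Finset.card_bij (fun i _ => (g i : Sym2 V)) ?_ ?_ ?_
  · intro i hi
    simpa using hi
  · intro a _ b _ hab
    exact g.injective (Subtype.ext hab)
  · intro e he
    rw [Finset.mem_filter] at he
    exact ⟨g.symm ⟨e, he.1⟩, by simpa using he.2, by simp⟩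

theorem exists_adj_dist_succ (hG : G.Connected) {z w : V} (h : z ≠ w) :
    ∃ y, G.Adj z y ∧ G.dist y w + 1 = G.dist z w := by
  obtain ⟨p, hp⟩ := hG.exists_walk_length_eq_dist z w
  cases p with
  | nil => exact absurd rfl h
  | cons hadj q =>
    refine ⟨_, hadj, ?_⟩
    rw [SimpleGraph.Walk.length_cons] at hp
    have := SimpleGraph.dist_le q
    have := hG.dist_triangle (u := z) (v := _) (w := w) |>.trans
      (Nat.add_le_add_right (SimpleGraph.dist_eq_one_iff_adj.2 hadj).le _)
    omega

theorem dist_eq_of_leaf (hG : G.Connected) {z y w : V} (hz : ∀ x, G.Adj z x → x = y)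
    (h : z ≠ w) : G.dist z w = G.dist y w + 1 := by
  obtain ⟨x, hx, hd⟩ := exists_adj_dist_succ hG h
  rw [← hz x hx, hd]

theorem leaf_of_side_eq_one [Fintype V] (hT : G.IsTree) {x y : V} (hxy : G.Adj x y)
    (h : side G x y = 1) : ∀ z, G.Adj x z → z = y := by
  intro z hz
  by_contra hzy
  obtain ⟨a, ha⟩ := Finset.card_eq_one.1 h
  have hx : x ∈ ({a} : Finset V) := by
    rw [← ha]; simp [SimpleGraph.dist_eq_one_iff_adj.2 hxy]
  have hd1 : G.dist z x = 1 := SimpleGraph.dist_eq_one_iff_adj.2 hz.symm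
  have hne := hT.dist_ne_of_adj z hxy
  have hpos := hT.connected.pos_dist_of_ne hzy
  have hz' : z ∈ ({a} : Finset V) := by
    rw [← ha]; simp only [Finset.mem_filter, Finset.mem_univ, true_and]; omega
  rw [Finset.mem_singleton] at hx hz'
  exact hz.ne (hx.trans hz'.symm)

/-- A graph consisting of a geodesic and further vertices, all of them adjacent only to the
middle vertex `P (⌈k/2⌉ - 1)`, is isomorphic to `CP_{n,k}^{⌈k/2⌉}`. -/
theorem IsGeodesic.nonempty_iso_cpOne [Fintype V] (hP : IsGeodesic G k P) (hk : 3 ≤ k)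
    (hkn : k ≤ Fintype.card V)
    (hz : ∀ z, (∀ a < k, z ≠ P a) → ∀ w, G.Adj z w ↔ w = P ((k + 1) / 2 - 1)) :
    Nonempty (G ≃g cpOne (Fintype.card V) k ((k + 1) / 2)) := by
  obtain ⟨g, hg⟩ := Finset.exists_equiv_extend_of_card_eq (α := Fin (Fintype.card V))
    (t := (Finset.univ : Finset V)) (by simp)
    (s := Finset.univ.filter fun i : Fin (Fintype.card V) => (i : ℕ) < k)
    (f := fun i => P i) (Finset.subset_univ _) (by
      intro a ha b hb hab
      simp only [Finset.coe_filter, Finset.mem_univ, true_and, Set.mem_ofPred_eq] at ha hb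
      exact Fin.ext (hP.injOn ha hb hab))
  let f : Fin (Fintype.card V) ≃ V :=
    g.trans (Equiv.subtypeUnivEquiv fun x => Finset.mem_univ x)
  have hf (i : Fin (Fintype.card V)) (hi : (i : ℕ) < k) : f i = P i := hg i (by simpa using hi)
  have hoff (i : Fin (Fintype.card V)) (hi : k ≤ (i : ℕ)) : ∀ a < k, f i ≠ P a := by
    intro a ha h
    rw [← hf ⟨a, by omega⟩ ha] at h
    have := f.injective h
    rw [Fin.ext_iff] at this
    simp only at this
    omega
  have hmid (i : Fin (Fintype.card V)) : f i = P ((k + 1) / 2 - 1) ↔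
      (i : ℕ) = (k + 1) / 2 - 1 := by
    rw [← hf ⟨(k + 1) / 2 - 1, by omega⟩ (by simp only; omega), f.apply_eq_iff_eq, Fin.ext_iff]
  refine ⟨SimpleGraph.Iso.symm ⟨f, ?_⟩⟩
  intro x y
  rw [cpOne_adj, Ne, Fin.ext_iff]
  by_cases hx : (x : ℕ) < k
  · by_cases hy : (y : ℕ) < k
    · rw [hf x hx, hf y hy, hP.adj_iff hx hy]
      omega
    · rw [G.adj_comm, hz _ (hoff y (by omega)), hmid]
      omega
  · rw [hz _ (hoff x (by omega)), hmid]
    omega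

theorem IsGeodesic.leaf_of_mu [Fintype V] (hP : IsGeodesic G k P) (hT : G.IsTree)
    (hk : 3 ≤ k)
    (hoff : ∀ x y, G.Adj x y → (∃ i, i + 1 < k ∧ s(x, y) = s(P i, P (i + 1))) ∨ mu G x y = 1)
    {z : V} (hz : ∀ a < k, z ≠ P a) : ∃ c < k, ∀ w, G.Adj z w ↔ w = P c := by
  have hedge (x y : V) (hx : ∀ a < k, x ≠ P a) (hxy : G.Adj x y) :
      (∀ w, G.Adj x w → w = y) ∨ ((∀ a < k, y ≠ P a) ∧ ∀ w, G.Adj y w → w = x) := by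
    rcases hoff x y hxy with ⟨i, hi, h⟩ | h
    · rw [Sym2.eq_iff] at h
      rcases h with ⟨h, -⟩ | ⟨h, -⟩
      · exact absurd h (hx _ (by omega))
      · exact absurd h (hx _ hi)
    · rw [mu] at h
      have : side G x y = 1 ∨ side G y x = 1 := by omega
      rcases this with h | h
      · exact Or.inl (leaf_of_side_eq_one hT hxy h)
      · have hleaf := leaf_of_side_eq_one hT hxy.symm h
        refine Or.inr ⟨fun a ha hya => ?_, hleaf⟩
        by_cases h1 : a + 1 < k
        · have := hleaf (P (a + 1)) (by rw [hya, hP.adj_iff ha h1]; omega)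
          exact hx _ h1 this.symm
        · have := hleaf (P (a - 1)) (by rw [hya, hP.adj_iff ha (by omega)]; omega)
          exact hx _ (by omega) this.symm
  have hnear (z : V) (hz : ∀ a < k, z ≠ P a) :
      ∃ y, G.Adj z y ∧ G.dist y (P 0) + 1 = G.dist z (P 0) ∧ ∀ w, G.Adj z w → w = y := by
    obtain ⟨y, hzy, hd⟩ := exists_adj_dist_succ hT.connected (hz 0 (by omega))
    refine ⟨y, hzy, hd, (hedge z y hz hzy).resolve_right ?_⟩
    rintro ⟨h1, h2⟩
    have := dist_eq_of_leaf hT.connected h2 (h1 0 (by omega))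
    omega
  obtain ⟨y, hzy, hd, hleaf⟩ := hnear z hz
  have hy : ∃ a < k, y = P a := by
    by_contra! hcon
    obtain ⟨x, -, hd', hleaf'⟩ := hnear y hcon
    rw [← hleaf' z hzy.symm] at hd'
    omega
  obtain ⟨a, ha, rfl⟩ := hy
  exact ⟨a, ha, fun w => ⟨hleaf w, fun h => h ▸ hzy⟩⟩

/-- If `μ` is as small as possible on all edges of a tree with a given geodesic on `k` vertices,
then the tree is isomorphic to `CP_{n,k}^{⌈k/2⌉}`. -/
theorem IsGeodesic.nonempty_iso_cpOne_of_mu [Fintype V] (hP : IsGeodesic G k P)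
    (hT : G.IsTree) (hk : 3 ≤ k) (hkn : k ≤ Fintype.card V)
    (hoff : ∀ x y, G.Adj x y → (∃ i, i + 1 < k ∧ s(x, y) = s(P i, P (i + 1))) ∨ mu G x y = 1)
    (hon : ∀ i, i + 1 < k → mu G (P i) (P (i + 1)) = min (i + 1) (k - 1 - i)) :
    Nonempty (G ≃g cpOne (Fintype.card V) k ((k + 1) / 2)) := by
  have hleaf {z : V} (hz : ∀ a < k, z ≠ P a) := hP.leaf_of_mu hT hk hoff hz
  have hlt {z : V} (hz : ∀ a < k, z ≠ P a) {c : ℕ} (hc : ∀ w, G.Adj z w ↔ w = P c) {i : ℕ}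
      (hi : i + 1 < k) (hci : c ≤ i) : i + 1 < side G (P i) (P (i + 1)) := by
    apply hP.card_lt_side hi hz
    rw [dist_eq_of_leaf hT.connected (fun x hx => (hc x).1 hx) (hz i (by omega)),
      dist_eq_of_leaf hT.connected (fun x hx => (hc x).1 hx) (hz (i + 1) hi),
      hP c i hci (by omega), hP c (i + 1) (by omega) hi]
    omega
  have hgt {z : V} (hz : ∀ a < k, z ≠ P a) {c : ℕ} (hck : c < k)
      (hc : ∀ w, G.Adj z w ↔ w = P c) {i : ℕ}
      (hi : i + 1 < k) (hci : i < c) : k - 1 - i < side G (P (i + 1)) (P i) := by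
    apply hP.card_lt_side' hi hz
    rw [dist_eq_of_leaf hT.connected (fun x hx => (hc x).1 hx) (hz i (by omega)),
      dist_eq_of_leaf hT.connected (fun x hx => (hc x).1 hx) (hz (i + 1) hi),
      SimpleGraph.dist_comm (u := P c), SimpleGraph.dist_comm (u := P c),
      hP i c (by omega) hck, hP (i + 1) c (by omega) hck]
    omega
  have hlow {z : V} (hz : ∀ a < k, z ≠ P a) {c : ℕ}
      (hc : ∀ w, G.Adj z w ↔ w = P c) : (k + 1) / 2 - 1 ≤ c := by
    by_contra! hcon
    have h1 := hlt hz hc (i := (k + 1) / 2 - 2) (by omega) (by omega)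
    have h2 := hP.card_le_side' (i := (k + 1) / 2 - 2) (by omega)
    have h3 := hon ((k + 1) / 2 - 2) (by omega)
    rw [mu] at h3
    omega
  have hhigh {z : V} (hz : ∀ a < k, z ≠ P a) {c : ℕ} (hck : c < k)
      (hc : ∀ w, G.Adj z w ↔ w = P c) : c ≤ k / 2 := by
    by_contra! hcon
    have h1 := hgt hz hck hc (i := k / 2) (by omega) (by omega)
    have h2 := hP.card_le_side (i := k / 2) (by omega)
    have h3 := hon (k / 2) (by omega)
    rw [mu] at h3
    omega
  by_cases hall : ∀ z, (∀ a < k, z ≠ P a) → ∀ w, G.Adj z w ↔ w = P ((k + 1) / 2 - 1)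
  · exact hP.nonempty_iso_cpOne hk hkn hall
  · push Not at hall
    obtain ⟨z₀, hz₀, hne⟩ := hall
    obtain ⟨c₀, hck₀, hc₀⟩ := hleaf hz₀
    have hc₀ne : c₀ ≠ (k + 1) / 2 - 1 := by
      rintro rfl
      obtain ⟨w, hw⟩ := hne
      have := hc₀ w
      tauto
    have := hlow hz₀ hc₀
    have := hhigh hz₀ hck₀ hc₀
    refine hP.reverse.nonempty_iso_cpOne hk hkn fun z hz w => ?_
    have hz' : ∀ a < k, z ≠ P a := fun a ha h => hz (k - 1 - a) (by omega) (by
      rw [h]; congr 1; omega)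
    obtain ⟨c, hck, hc⟩ := hleaf hz'
    have := hlow hz' hc
    have := hhigh hz' hck hc
    have hce : c = k - 1 - ((k + 1) / 2 - 1) := by
      by_contra hce
      have h1 := hlt hz' hc (i := k / 2 - 1) (by omega) (by omega)
      have h2 := hgt hz₀ hck₀ hc₀ (i := k / 2 - 1) (by omega) (by omega)
      have h3 := hon (k / 2 - 1) (by omega)
      rw [mu] at h3
      omega
    rw [hc, hce]

end Geodesic

/-- Let `T` be a tree on `n` vertices with diameter `k − 1`, where
`3 ≤ k ≤ n`. Then `T ⪰ CP_{n,k}^{⌈k/2⌉}`, and `r(T) = r(CP_{n,k}^{⌈k/2⌉})` iff `T` is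
isomorphic to `CP_{n,k}^{⌈k/2⌉}`. -/
theorem stmt13 {V : Type*} [Fintype V] (G : SimpleGraph V) (hT : G.IsTree) (k : ℕ)
    (hk3 : 3 ≤ k) (hkn : k ≤ Fintype.card V) (hd : G.diam = k - 1) :
    Preceq (Fintype.card V) (cpOne (Fintype.card V) k ((k + 1) / 2)) G ∧
    (SameEdgeDivision (Fintype.card V) G (cpOne (Fintype.card V) k ((k + 1) / 2)) ↔
      Nonempty (G ≃g cpOne (Fintype.card V) k ((k + 1) / 2))) := by
  obtain ⟨P, hP⟩ := exists_isGeodesic hT.connected hd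
  obtain ⟨g, hg⟩ := hP.exists_edge_equiv hT
  have hle := hP.spineMu_le hg
  have hsub (j : ℕ) : (Finset.univ.filter fun i : Fin (Fintype.card V - 1) => j ≤ spineMu k i) ⊆
      Finset.univ.filter fun i : Fin (Fintype.card V - 1) => j ≤ muE G (g i) :=
    Finset.monotone_filter_right _ fun i _ hi => hi.trans (hle i)
  refine ⟨fun j _ _ => ?_, fun hsame => ?_, fun ⟨f⟩ i _ _ => r_eq_of_iso f i⟩
  · rw [tailSum_eq_card_of_equiv g]
    exact (tailSum_cpOne_le hk3 hkn j).trans (Finset.card_le_card (hsub j))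
  · have heq (i : Fin (Fintype.card V - 1)) : muE G (g i) = spineMu k i := by
      refine le_antisymm ?_ (hle i)
      have htail : tailSum G (Fintype.card V) (muE G (g i)) =
          tailSum (cpOne (Fintype.card V) k ((k + 1) / 2)) (Fintype.card V) (muE G (g i)) := by
        refine Finset.sum_congr rfl fun j hj => ?_
        rw [Finset.mem_Icc] at hj
        exact hsame j ((muE_mem_Icc (g i).2).1.trans hj.1) hj.2
      rw [tailSum_eq_card_of_equiv g] at htail
      have hfin := Finset.eq_of_subset_of_card_le (hsub (muE G (g i)))
        (htail.le.trans (tailSum_cpOne_le hk3 hkn _))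
      have hi : i ∈ Finset.univ.filter fun i' : Fin (Fintype.card V - 1) =>
          muE G (g i) ≤ muE G (g i') := by simp
      rw [← hfin] at hi
      simpa using hi
    refine hP.nonempty_iso_cpOne_of_mu hT hk3 hkn (fun x y hxy => ?_) fun i hi => ?_
    · obtain ⟨i, hi⟩ := g.surjective ⟨s(x, y), mem_edges.2 hxy⟩
      have hi' : (g i : Sym2 V) = s(x, y) := by rw [hi]
      by_cases hik : (i : ℕ) + 1 < k
      · exact Or.inl ⟨i, hik, by rw [← hi', hg i hik]⟩
      · right
        have := heq i
        rwa [hi', muE_mk, spineMu, if_neg hik] at this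
    · have := heq ⟨i, by omega⟩
      rwa [hg _ hi, muE_mk, spineMu, if_pos hi] at this

end TreeOrder
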